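/- Let F be a formal group law over a commutative ring R. Then in R⟦z0^{±1},z1^{±1},z2^{±1}⟧ one has i_{z1,z0} z2^{-1}δ_F(F(z1,ι z0)/z2) = i_{z2,z0} z1^{-1}δ_F(F(z0,z2)/z1), where i_{z1,z0} z2^{-1}δ_F(F(z1,ι z0)/z2) denotes the bilateral series obtained from z2^{-1}δ_F(w/z2) by substituting w^{±1} ↦ i_{z1,z0}F(z1,ι z0)^{±1} (integer powers of F(z1,ι z0) expanded in R((z1))⟦z0⟧), and i_{z2,z0} z1^{-1}δ_F(F(z0,z2)/z1) is obtained from z1^{-1}δ_F(w/z1) by substituting w^{±1} ↦ i_{z2,z0}F(z0,z2)^{±1} (integer powers of F(z0,z2) expanded in R((z2))⟦z0⟧). -/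

import Mathlib

/-!
Coefficient-wise formal calculus for vertex `F`-algebras, following
M. Upmeier, "Vertex F-Algebras and Their Associated Lie Algebra".

Series in one, two or three variables are represented by their coefficient
functions `ℤ → R`, `ℤ → ℤ → R`, …; products are given by coefficient-wise
(finite) sums, expressed via `finsum` (`∑ᶠ`).
-/

open scoped BigOperators

noncomputable section

/-- Generalized binomial coefficient `C(n,k) = n(n-1)⋯(n-k+1)/k!` for `n : ℤ`, `k : ℕ`. -/
def zbinom (n : ℤ) (k : ℕ) : ℤ :=
  if 0 ≤ n then (n.toNat.choose k : ℤ)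
  else (-1 : ℤ) ^ k * (((k : ℤ) - n - 1).toNat.choose k : ℤ)

/-- `C(n,m)` for integer `m`, with `C(n,m) = 0` for `m < 0`. -/
def zbinomZ (n m : ℤ) : ℤ := if m < 0 then 0 else zbinom n m.toNat

/-- `(-1)^n` for `n : ℤ`. -/
def msign (n : ℤ) : ℤ := if Even n then 1 else -1

section Series

variable {R : Type*} [CommRing R] {M : Type*} [AddCommGroup M] [Module R M]

/-- Product of a one-variable series with `R`-coefficients with an `M`-valued one. -/
def mulS (f : ℤ → R) (g : ℤ → M) : ℤ → M := fun n => ∑ᶠ i : ℤ, f i • g (n - i)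

/-- The constant series `1` (one variable). -/
def oneS (R : Type*) [CommRing R] : ℤ → R := fun n => if n = 0 then 1 else 0

/-- Natural powers of a one-variable series. -/
def pow1 (f : ℤ → R) : ℕ → ℤ → R
  | 0 => oneS R
  | k + 1 => mulS f (pow1 f k)

/-- Product of two-variable series. -/
def mulS2 (f : ℤ → ℤ → R) (g : ℤ → ℤ → M) : ℤ → ℤ → M :=
  fun a b => ∑ᶠ p : ℤ × ℤ, f p.1 p.2 • g (a - p.1) (b - p.2)

/-- The constant series `1` (two variables). -/
def oneS2 (R : Type*) [CommRing R] : ℤ → ℤ → R := fun a b => if a = 0 ∧ b = 0 then 1 else 0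

/-- Natural powers of a two-variable series. -/
def pow2 (f : ℤ → ℤ → R) : ℕ → ℤ → ℤ → R
  | 0 => oneS2 R
  | k + 1 => mulS2 f (pow2 f k)

/-- `f ∈ M((z))`: only finitely many negative powers. -/
def IsLaurent (f : ℤ → M) : Prop := ∃ N : ℤ, ∀ n : ℤ, n < N → f n = 0

/-- `f ∈ M((z,w))`: only finitely many nonzero coefficients with some negative index. -/
def IsLaurent2 (f : ℤ → ℤ → M) : Prop :=
  {p : ℤ × ℤ | (p.1 < 0 ∨ p.2 < 0) ∧ f p.1 p.2 ≠ 0}.Finite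

/-- Formal derivative of a one-variable series. -/
def fderiv1 (f : ℤ → R) : ℤ → R := fun n => ((n + 1 : ℤ) : R) * f (n + 1)

/-- The polynomial `z - w` as a two-variable series. -/
def zmw (R : Type*) [CommRing R] : ℤ → ℤ → R :=
  fun i j => if i = 1 ∧ j = 0 then 1 else if i = 0 ∧ j = 1 then -1 else 0

/-- `∂/∂w` of a two-variable series. -/
def d01 (f : ℤ → ℤ → R) : ℤ → ℤ → R := fun i j => ((j + 1 : ℤ) : R) * f i (j + 1)

/-- `∂/∂z` of a two-variable series. -/
def d10 (f : ℤ → ℤ → R) : ℤ → ℤ → R := fun i j => ((i + 1 : ℤ) : R) * f (i + 1) j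

/-- Substitution `p(f(z,w))` of a two-variable series (zero constant term) into a
one-variable power series `p`. -/
def comp2 (p : ℤ → R) (f : ℤ → ℤ → R) : ℤ → ℤ → R :=
  fun a b => ∑ᶠ m : ℕ, p (m : ℤ) * pow2 f m a b

/-- Substitution `p(f(z))` of a one-variable series (zero constant term) into a
one-variable power series `p`. -/
def comp1 (p : ℤ → R) (f : ℤ → R) : ℤ → R :=
  fun a => ∑ᶠ m : ℕ, p (m : ℤ) * pow1 f m a

/-- `(G - z)/z` for `G ≡ z (mod w)`. -/
def hzS (G : ℤ → ℤ → R) : ℤ → ℤ → R := fun i j => G (i + 1) j - oneS2 R i j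

/-- Integer powers `i_{z,w} G^n`, for `G ≡ z (mod w)`, expanded in `R((z))⟦w⟧`:
the Newton expansion `z^n ∑_k C(n,k) ((G-z)/z)^k`. -/
def izwPow (G : ℤ → ℤ → R) (n : ℤ) : ℤ → ℤ → R :=
  fun a b => ∑ᶠ k : ℕ, (zbinom n k : R) * pow2 (hzS G) k (a - n) b

/-- `(G - w)/w` for `G ≡ w (mod z)`. -/
def hwS (G : ℤ → ℤ → R) : ℤ → ℤ → R := fun i j => G i (j + 1) - oneS2 R i j

/-- Integer powers `i_{w,z} G^n`, for `G ≡ w (mod z)`, expanded in `R((w))⟦z⟧`. -/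
def iwzPow (G : ℤ → ℤ → R) (n : ℤ) : ℤ → ℤ → R :=
  fun a b => ∑ᶠ k : ℕ, (zbinom n k : R) * pow2 (hwS G) k a (b - n)

/-- `(G + w)/(-w)` for `G ≡ ι(w) (mod z)`. -/
def hwNegS (G : ℤ → ℤ → R) : ℤ → ℤ → R := fun i j => -G i (j + 1) - oneS2 R i j

/-- Integer powers `i_{w,z} G^n`, for `G ≡ -w(1+⋯) (mod z)` (e.g. `G = F(z, ι w)`),
expanded in `R((w))⟦z⟧`. -/
def iwzPowNeg (G : ℤ → ℤ → R) (n : ℤ) : ℤ → ℤ → R :=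
  fun a b => (msign n : R) * ∑ᶠ k : ℕ, (zbinom n k : R) * pow2 (hwNegS G) k a (b - n)

/-- `(f + z)/(-z)` for a series `f = -z(1 + ⋯)` such as `ι(z)`. -/
def hS (f : ℤ → R) : ℤ → R := fun j => -f (j + 1) - oneS R j

/-- Integer powers `f(z)^n` (`n : ℤ`) for `f = -z(1+⋯)`, e.g. `f = ι(z)`. -/
def iotaPow (f : ℤ → R) (n : ℤ) : ℤ → R :=
  fun a => (msign n : R) * ∑ᶠ k : ℕ, (zbinom n k : R) * pow1 (hS f) k (a - n)

/-- `f - 1` for a power series with constant term `1`. -/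
def hOneS (f : ℤ → R) : ℤ → R := fun j => f j - oneS R j

/-- Multiplicative inverse of a power series with constant term `1`. -/
def invOne (f : ℤ → R) : ℤ → R :=
  fun a => ∑ᶠ k : ℕ, ((-1 : R) ^ k) * pow1 (hOneS f) k a

end Series

/-- A (one-dimensional, commutative) formal group law `F(z,w)` over `R`, together with
its (unique) inverse `ι`. -/
structure FormalGroupLaw (R : Type*) [CommRing R] where
  F : ℤ → ℤ → R
  F_supp : ∀ i j : ℤ, i < 0 ∨ j < 0 → F i j = 0
  /-- `F(z,0) = z`, so that `F(z,w) = z + w + O(zw)` using commutativity. -/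
  F_modw : ∀ i : ℤ, F i 0 = if i = 1 then 1 else 0
  F_comm : ∀ i j : ℤ, F i j = F j i
  /-- associativity `F(F(z,w),v) = F(z,F(w,v))`, coefficient-wise. -/
  F_assoc : ∀ a b c : ℤ,
    (∑ᶠ m : ℕ, F (m : ℤ) c * pow2 F m a b) = ∑ᶠ n : ℕ, F a (n : ℤ) * pow2 F n b c
  /-- the inverse `ι(z) = -z + O(z²)`. -/
  inv : ℤ → R
  inv_supp : ∀ n : ℤ, n < 1 → inv n = 0
  inv_one : inv 1 = -1
  /-- `F(z, ι(z)) = 0`, coefficient-wise. -/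
  inv_eq : ∀ n : ℤ, (∑ᶠ p : ℤ × ℕ, F p.1 (p.2 : ℤ) * pow1 inv p.2 (n - p.1)) = 0

namespace FormalGroupLaw

variable {R : Type*} [CommRing R] {M : Type*} [AddCommGroup M] [Module R M]

/-- The series `F(z, ι(w))`. -/
def Fzi (𝓕 : FormalGroupLaw R) : ℤ → ℤ → R :=
  fun i j => ∑ᶠ m : ℕ, 𝓕.F i (m : ℤ) * pow1 𝓕.inv m j

/-- The `F`-delta distribution `z⁻¹δ_F(w/z) = i_{z,w}F(z,ιw)⁻¹ - i_{w,z}F(z,ιw)⁻¹`. -/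
def delta (𝓕 : FormalGroupLaw R) : ℤ → ℤ → R :=
  fun a b => izwPow 𝓕.Fzi (-1) a b - iwzPowNeg 𝓕.Fzi (-1) a b

/-- `p_F(z) = F^{0,1}(z,0)⁻¹`, the coefficient series of the invariant 1-form. -/
def pF (𝓕 : FormalGroupLaw R) : ℤ → R := invOne (fun i => 𝓕.F i 1)

/-- `F`-residue: the coefficient of `z⁻¹` in `f(z)·p_F(z)`. -/
def resF (𝓕 : FormalGroupLaw R) (f : ℤ → M) : M := ∑ᶠ i : ℤ, 𝓕.pF i • f (-1 - i)

/-- The `F`-hyperderivative `𝒮^F_n f`, defined by `i_{z,w}f(F(z,w)) = ∑_n (𝒮^F_n f)(z) wⁿ`. -/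
def hyper (𝓕 : FormalGroupLaw R) (n : ℕ) (f : ℤ → R) : ℤ → R :=
  fun a => ∑ᶠ m : ℤ, f m * izwPow 𝓕.F m a (n : ℤ)

/-- `F`-binomial coefficients: `i_{z,w}F(z,w)^n = ∑_{i,j} binomF(n;i,j) z^i w^j`. -/
def binomF (𝓕 : FormalGroupLaw R) (n i j : ℤ) : R := izwPow 𝓕.F n i j

/-- `φ` is a logarithm of `F`: `φ(F(z,w)) = φ(z) + φ(w)`, `φ(0) = 0`, `φ'(0) = 1`. -/
def IsLogarithm (𝓕 : FormalGroupLaw R) (φ : ℤ → R) : Prop :=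
  (∀ n : ℤ, n < 0 → φ n = 0) ∧ φ 0 = 0 ∧ φ 1 = 1 ∧
  ∀ a b : ℤ, (∑ᶠ m : ℕ, φ (m : ℤ) * pow2 𝓕.F m a b)
    = (if b = 0 then φ a else 0) + (if a = 0 then φ b else 0)

end FormalGroupLaw

section Vertex

variable {R : Type*} [CommRing R] {V : Type*} [AddCommGroup V] [Module R V]

/-- For `c = ∑_m c_m v^m ∈ V((v))`, the substitution `v ↦ F(z,w)` (coefficient `(k,n)` of
`z^k w^n`, expanded in `V((z))⟦w⟧`). -/
def substF (𝓕 : FormalGroupLaw R) (c : ℤ → V) : ℤ → ℤ → V :=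
  fun k n => ∑ᶠ m : ℤ, izwPow 𝓕.F m k n • c m

/-- Coefficients of `i_{z,w} Y(a, F(z,w)) (Y(b,w)c)`, where `Ya v = Y(a,·)v` and
`d = Y(b,·)c`. -/
def substFProd (𝓕 : FormalGroupLaw R) (Ya : V → ℤ → V) (d : ℤ → V) : ℤ → ℤ → V :=
  fun k n => ∑ᶠ q : ℤ × ℤ, izwPow 𝓕.F q.1 k (n - q.2) • Ya (d q.2) q.1

end Vertex

/-- A vertex `F`-algebra `(V, 𝟙, 𝒮, Y)` over the formal group law `𝓕`.
`Y a b : ℤ → V` records the coefficients of `Y(a,z)b = ∑_k (Y a b k) z^k`, and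
`S n` is the component `𝒮⁽ⁿ⁾` of the `F`-shift operator `𝒮(z) = ∑_{n≥0} 𝒮⁽ⁿ⁾ zⁿ`. -/
structure VertexFAlgebra (R : Type*) [CommRing R] (𝓕 : FormalGroupLaw R)
    (V : Type*) [AddCommGroup V] [Module R V] where
  vac : V
  S : ℕ → V →ₗ[R] V
  Y : V →ₗ[R] V →ₗ[R] (ℤ → V)
  /-- `Y(a,z)b ∈ V((z))`. -/
  Y_laurent : ∀ a b : V, IsLaurent (Y a b)
  /-- `Y(a,z)𝟙` is holomorphic. -/
  vac_holo : ∀ (a : V) (k : ℤ), k < 0 → Y a vac k = 0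
  /-- `Y(a,z)𝟙|_{z=0} = a`. -/
  creation : ∀ a : V, Y a vac 0 = a
  /-- `Y(𝟙,z) = id`. -/
  Y_vac : ∀ (b : V) (k : ℤ), Y vac b k = if k = 0 then b else 0
  /-- `𝒮(0) = id`. -/
  S_zero : S 0 = LinearMap.id
  /-- `𝒮(z)𝟙 = 𝟙`. -/
  S_vac : ∀ n : ℕ, 1 ≤ n → S n vac = 0
  /-- `𝒮(z) ∘ 𝒮(w) = 𝒮(F(z,w))`, coefficient-wise. -/
  S_comp : ∀ (a : V) (i j : ℕ),
    S i (S j a) = ∑ᶠ m : ℕ, pow2 𝓕.F m (i : ℤ) (j : ℤ) • S m a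
  /-- `F`-translation covariance `Y(𝒮(w)a, z)b = i_{z,w} Y(a,F(z,w))b`. -/
  translation : ∀ (a b : V) (k : ℤ) (n : ℕ),
    Y (S n a) b k = substF 𝓕 (Y a b) k (n : ℤ)
  /-- weak `F`-associativity. -/
  weak_assoc : ∀ a b c : V, ∃ N : ℕ,
    mulS2 (pow2 𝓕.F N) (fun k l => Y (Y a b k) c l)
      = mulS2 (pow2 𝓕.F N) (substFProd 𝓕 (fun v => Y a v) (Y b c))
  /-- skew symmetry `Y(a,z)b = 𝒮(z)(Y(b,ι(z))a)`, coefficient-wise. -/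
  skew : ∀ (a b : V) (k : ℤ),
    Y a b k = ∑ᶠ q : ℕ × ℤ, iotaPow 𝓕.inv q.2 (k - (q.1 : ℤ)) • S q.1 (Y b a q.2)

end

section Expansion

open MvPowerSeries

theorem finsum_eq_finsum_comp {α β M : Type*} [AddCommMonoid M] {g : β → α}
    (hg : Function.Injective g) {f : α → M} (hf : ∀ a, a ∉ Set.range g → f a = 0) :
    ∑ᶠ a, f a = ∑ᶠ b, f (g b) := by
  rw [← finsum_mem_range hg, ← finsum_mem_univ f]
  refine finsum_mem_inter_support_eq' _ _ _ fun a ha => ?_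
  simpa using by_contra fun h => ha (hf a (by simpa using h))

variable {R : Type*} [CommRing R] {σ τ : Type*}

/-- The inclusion of exponents into integral exponents. -/
def intExp (d : σ →₀ ℕ) : σ → ℤ := fun i => d i

theorem intExp_injective : Function.Injective (intExp : (σ →₀ ℕ) → σ → ℤ) := by
  intro d e h
  ext i
  exact Int.ofNat_inj.mp (congrFun h i)

theorem intExp_add (d e : σ →₀ ℕ) : intExp (d + e) = intExp d + intExp e := by
  ext i
  simp [intExp]

theorem mem_range_intExp [Finite σ] {e : σ → ℤ} : e ∈ Set.range intExp ↔ ∀ i, 0 ≤ e i := by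
  constructor
  · rintro ⟨d, rfl⟩ i
    exact Int.natCast_nonneg _
  · intro h
    refine ⟨Finsupp.equivFunOnFinite.symm fun i => (e i).toNat, ?_⟩
    ext i
    simp [intExp, h i]

/-- The coefficients of a power series, extended by zero to integral exponents. -/
noncomputable def zcoeff (P : MvPowerSeries σ R) : (σ → ℤ) → R :=
  Function.extend intExp (fun d => coeff d P) 0

@[simp]
theorem zcoeff_intExp (P : MvPowerSeries σ R) (d : σ →₀ ℕ) :
    zcoeff P (intExp d) = coeff d P :=
  intExp_injective.extend_apply _ _ _

theorem zcoeff_of_notMem_range (P : MvPowerSeries σ R) {e : σ → ℤ} (he : e ∉ Set.range intExp) :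
    zcoeff P e = 0 :=
  Function.extend_apply' _ _ _ he

theorem zcoeff_of_neg (P : MvPowerSeries σ R) {e : σ → ℤ} {i : σ} (hi : e i < 0) :
    zcoeff P e = 0 := by
  refine zcoeff_of_notMem_range P ?_
  rintro ⟨d, rfl⟩
  exact absurd hi (not_lt.mpr (Int.natCast_nonneg _))

@[simp]
theorem zcoeff_zero (e : σ → ℤ) : zcoeff (0 : MvPowerSeries σ R) e = 0 := by
  by_cases he : e ∈ Set.range intExp
  · obtain ⟨n, rfl⟩ := he
    simp
  · exact zcoeff_of_notMem_range _ he

theorem zcoeff_mul (P Q : MvPowerSeries σ R) (e : σ → ℤ) :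
    ∑ᶠ p, zcoeff P p * zcoeff Q (e - p) = zcoeff (P * Q) e := by
  classical
  rw [finsum_eq_finsum_comp intExp_injective fun p hp => by
    rw [zcoeff_of_notMem_range P hp, zero_mul]]
  by_cases he : e ∈ Set.range intExp
  · obtain ⟨n, rfl⟩ := he
    have hinj : Set.InjOn Prod.fst
        (Finset.HasAntidiagonal.antidiagonal n : Set ((σ →₀ ℕ) × (σ →₀ ℕ))) := by
      intro x hx y hy hxy
      rw [Finset.mem_coe, Finset.HasAntidiagonal.mem_antidiagonal] at hx hy
      refine Prod.ext hxy (add_left_cancel (a := x.1) ?_)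
      rw [hx, hxy, hy]
    rw [zcoeff_intExp, coeff_mul, finsum_eq_sum_of_support_subset
      (s := (Finset.HasAntidiagonal.antidiagonal n).image Prod.fst), Finset.sum_image hinj]
    · refine Finset.sum_congr rfl fun x hx => ?_
      rw [← Finset.HasAntidiagonal.mem_antidiagonal.mp hx, intExp_add, add_sub_cancel_left,
        zcoeff_intExp, zcoeff_intExp]
    · intro d hd
      have hd' : intExp n - intExp d ∈ Set.range intExp := by
        by_contra h
        exact hd (by simp only [zcoeff_of_notMem_range Q h, mul_zero])
      obtain ⟨c, hc⟩ := hd'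
      have : n = d + c := intExp_injective (by rw [intExp_add, hc]; abel)
      simpa using ⟨c, this.symm⟩
  · rw [zcoeff_of_notMem_range _ he]
    refine finsum_eq_zero_of_forall_eq_zero fun d => ?_
    rw [zcoeff_of_notMem_range Q, mul_zero]
    rintro ⟨c, hc⟩
    exact he ⟨d + c, by rw [intExp_add, hc]; abel⟩

theorem zcoeff_add (P Q : MvPowerSeries σ R) (e : σ → ℤ) :
    zcoeff (P + Q) e = zcoeff P e + zcoeff Q e := by
  by_cases he : e ∈ Set.range intExp
  · obtain ⟨n, rfl⟩ := he
    simp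
  · simp [zcoeff_of_notMem_range _ he]

theorem zcoeff_neg (P : MvPowerSeries σ R) (e : σ → ℤ) :
    zcoeff (-P) e = -zcoeff P e := by
  by_cases he : e ∈ Set.range intExp
  · obtain ⟨n, rfl⟩ := he
    simp
  · simp [zcoeff_of_notMem_range _ he]

open Classical in
theorem zcoeff_one (e : σ → ℤ) :
    zcoeff (1 : MvPowerSeries σ R) e = if e = 0 then 1 else 0 := by
  have h0 : (0 : σ → ℤ) = intExp 0 := rfl
  by_cases he : e ∈ Set.range intExp
  · obtain ⟨n, rfl⟩ := he
    simp only [zcoeff_intExp, coeff_one, h0, intExp_injective.eq_iff]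
  · rw [zcoeff_of_notMem_range _ he, if_neg]
    rintro rfl
    exact he ⟨0, rfl⟩

theorem zcoeff_monomial_mul (d : σ →₀ ℕ) (P : MvPowerSeries σ R) (e : σ → ℤ) :
    zcoeff (monomial d 1 * P) e = zcoeff P (e - intExp d) := by
  by_cases he : e - intExp d ∈ Set.range intExp
  · obtain ⟨n, hn⟩ := he
    rw [← hn, ← add_sub_cancel (intExp d) e, ← hn, ← intExp_add, zcoeff_intExp, zcoeff_intExp,
      coeff_add_monomial_mul, one_mul]
  · rw [zcoeff_of_notMem_range _ he]
    by_cases he' : e ∈ Set.range intExp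
    · obtain ⟨n, rfl⟩ := he'
      rw [zcoeff_intExp, coeff_monomial_mul, if_neg]
      intro h
      refine he ⟨n - d, ?_⟩
      rw [eq_sub_iff_add_eq, ← intExp_add, tsub_add_cancel_of_le h]
    · exact zcoeff_of_notMem_range _ he'

/-- Substitution of monomials `X i ↦ X ^ m i` with linearly independent exponents. -/
theorem zcoeff_subst_monomial [Fintype σ] (m : σ → τ →₀ ℕ) {Φ : (σ → ℤ) → τ → ℤ}
    (hΦ : ∀ e t, Φ e t = ∑ i, e i * m i t) (hinj : Function.Injective Φ)
    (P : MvPowerSeries σ R) :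
    (∀ e, zcoeff (subst (fun i => monomial (m i) (1 : R)) P) (Φ e) = zcoeff P e) ∧
    ∀ e ∉ Set.range Φ, zcoeff (subst (fun i => monomial (m i) (1 : R)) P) e = 0 := by
  classical
  have hφ (d : σ →₀ ℕ) : Φ (intExp d) = intExp (∑ i, d i • m i) := by
    ext t
    simp [hΦ, intExp, Finsupp.finsetSum_apply]
  have hφinj {d d' : σ →₀ ℕ} (h : ∑ i, d i • m i = ∑ i, d' i • m i) : d = d' :=
    intExp_injective (hinj (by rw [hφ, hφ, h]))
  have hs : HasSubst fun i : σ => monomial (m i) (1 : R) := by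
    refine hasSubst_of_constantCoeff_zero fun i => ?_
    rw [← coeff_zero_eq_constantCoeff_apply, coeff_monomial, if_neg]
    intro h
    have : Finsupp.single i 1 = (0 : σ →₀ ℕ) := hφinj (by
      simp [Finsupp.single_apply, ite_smul, ← h])
    simp at this
  have hprod (d : σ →₀ ℕ) :
      (d.prod fun s n => monomial (m s) (1 : R) ^ n) = monomial (∑ i, d i • m i) 1 := by
    rw [Finsupp.prod_fintype _ _ (by simp)]
    simp only [monomial_pow, one_pow, prod_monomial, Finset.prod_const_one]
  have hcoeff (d : σ →₀ ℕ) : coeff (∑ i, d i • m i)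
      (subst (fun i => monomial (m i) (1 : R)) P) = coeff d P := by
    rw [coeff_subst hs, finsum_eq_single _ d]
    · rw [hprod, coeff_monomial_same, smul_eq_mul, mul_one]
    · intro d' hd'
      rw [hprod, coeff_monomial, if_neg fun h => hd' (hφinj h).symm, smul_zero]
  have hcoeff_zero (e : τ →₀ ℕ) (he : ∀ d : σ →₀ ℕ, e ≠ ∑ i, d i • m i) :
      coeff e (subst (fun i => monomial (m i) (1 : R)) P) = 0 := by
    rw [coeff_subst hs]
    refine finsum_eq_zero_of_forall_eq_zero fun d => ?_
    rw [hprod, coeff_monomial, if_neg (he d), smul_zero]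
  constructor
  · intro e
    by_cases he : e ∈ Set.range intExp
    · obtain ⟨d, rfl⟩ := he
      rw [hφ, zcoeff_intExp, zcoeff_intExp, hcoeff]
    · rw [zcoeff_of_notMem_range P he]
      by_cases he' : Φ e ∈ Set.range intExp
      · obtain ⟨c, hc⟩ := he'
        rw [← hc, zcoeff_intExp]
        refine hcoeff_zero c ?_
        rintro d rfl
        rw [← hφ] at hc
        exact he ⟨d, hinj hc⟩
      · exact zcoeff_of_notMem_range _ he'
  · intro e he
    by_cases he' : e ∈ Set.range intExp
    · obtain ⟨c, rfl⟩ := he'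
      rw [zcoeff_intExp]
      refine hcoeff_zero c ?_
      rintro d rfl
      exact he ⟨intExp d, hφ d⟩
    · exact zcoeff_of_notMem_range _ he'

theorem vec2_eq_intExp (d : Fin 2 →₀ ℕ) : ![(d 0 : ℤ), (d 1 : ℤ)] = intExp d := by
  ext i
  fin_cases i <;> rfl

theorem constantCoeff_eq_zcoeff (P : MvPowerSeries σ R) : constantCoeff P = zcoeff P 0 := by
  rw [← coeff_zero_eq_constantCoeff_apply, ← zcoeff_intExp]
  rfl

/-- The power series with coefficients `f i j` for `i, j ≥ 0`. -/
def ofCoeff2 (f : ℤ → ℤ → R) : MvPowerSeries (Fin 2) R := fun d => f (d 0) (d 1)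

theorem zcoeff_ofCoeff2 {f : ℤ → ℤ → R} (hf : ∀ i j, i < 0 ∨ j < 0 → f i j = 0) (i j : ℤ) :
    zcoeff (ofCoeff2 f) ![i, j] = f i j := by
  by_cases h : i < 0 ∨ j < 0
  · rw [hf i j h]
    rcases h with h | h
    · exact zcoeff_of_neg _ (i := 0) h
    · exact zcoeff_of_neg _ (i := 1) h
  · push Not at h
    obtain ⟨d, hd⟩ := mem_range_intExp (e := ![i, j]).mpr (by simpa [Fin.forall_fin_two] using h)
    rw [← hd, zcoeff_intExp]
    exact congrArg₂ f (congrFun hd 0) (congrFun hd 1)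

theorem pow2_zcoeff (L : ℤ × ℤ ≃+ (Fin 2 → ℤ)) (P : MvPowerSeries (Fin 2) R) (k : ℕ) :
    pow2 (fun a b => zcoeff P (L (a, b))) k = fun a b => zcoeff (P ^ k) (L (a, b)) := by
  induction k with
  | zero =>
    ext a b
    simp [pow2, oneS2, zcoeff_one]
  | succ k ih =>
    ext a b
    rw [pow2, ih, mulS2, pow_succ', ← zcoeff_mul, ← finsum_comp_equiv L.toEquiv]
    refine finsum_congr fun p => ?_
    change _ = zcoeff P (L p) * zcoeff (P ^ k) (L (a, b) - L p)
    rw [← map_sub]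
    rfl

theorem pow1_zcoeff (P : PowerSeries R) (k : ℕ) :
    pow1 (fun a => zcoeff P fun _ => a) k = fun a => zcoeff (P ^ k) fun _ => a := by
  induction k with
  | zero =>
    ext a
    simp [pow1, oneS, zcoeff_one, funext_iff]
  | succ k ih =>
    ext a
    rw [pow1, ih, mulS, pow_succ', ← zcoeff_mul, ← finsum_comp_equiv (Equiv.funUnique Unit ℤ).symm]
    rfl

/-- Pairs of integers as functions on `Fin 2`. -/
def pairEquiv : ℤ × ℤ ≃+ (Fin 2 → ℤ) where
  toFun p := ![p.1, p.2]
  invFun e := (e 0, e 1)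
  left_inv _ := rfl
  right_inv e := by ext i; fin_cases i <;> rfl
  map_add' p q := by ext i; fin_cases i <;> rfl

/-- The exponent of `x^(a+b) t^b`, which is `z^a w^b` under `z = x`, `w = x t`. -/
def shearEquiv : ℤ × ℤ ≃+ (Fin 2 → ℤ) where
  toFun p := ![p.1 + p.2, p.2]
  invFun e := (e 0 - e 1, e 1)
  left_inv p := by simp
  right_inv e := by ext i; fin_cases i <;> simp
  map_add' p q := by ext i; fin_cases i <;> simp [add_add_add_comm]

theorem pow2_zcoeff_pair (P : MvPowerSeries (Fin 2) R) (k : ℕ) :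
    pow2 (fun a b => zcoeff P ![a, b]) k = fun a b => zcoeff (P ^ k) ![a, b] :=
  pow2_zcoeff pairEquiv P k

theorem pow2_zcoeff_shear (P : MvPowerSeries (Fin 2) R) (k : ℕ) :
    pow2 (fun a b => zcoeff P ![a + b, b]) k = fun a b => zcoeff (P ^ k) ![a + b, b] :=
  pow2_zcoeff shearEquiv P k

theorem zbinom_eq_choose (n : ℤ) (k : ℕ) : zbinom n k = Ring.choose n k := by
  unfold zbinom
  split_ifs with h
  · obtain ⟨m, rfl⟩ := Int.eq_ofNat_of_zero_le h
    rw [Ring.choose_natCast, Int.toNat_natCast]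
  · rw [← neg_neg n, Ring.choose_neg,
      show -n + k - 1 = ((k - n - 1 : ℤ).toNat : ℤ) by omega, Ring.choose_natCast, neg_neg,
      Units.smul_def, Int.coe_negOnePow_natCast, smul_eq_mul]

theorem binomialSeries_int (n : ℤ) {σ : Type*} (u : (MvPowerSeries σ R)ˣ)
    (hu : constantCoeff (u : MvPowerSeries σ R) = 1) :
    (PowerSeries.binomialSeries R n).subst ((u : MvPowerSeries σ R) - 1) = ↑(u ^ n) := by
  have hs : PowerSeries.HasSubst ((u : MvPowerSeries σ R) - 1) :=
    .of_constantCoeff_zero (by simp [hu])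
  have hnat (k : ℕ) : (PowerSeries.binomialSeries R (k : ℤ)).subst ((u : MvPowerSeries σ R) - 1) =
      ↑(u ^ k) := by
    rw [PowerSeries.binomialSeries_nat, PowerSeries.subst_pow hs, PowerSeries.subst_add hs,
      PowerSeries.subst_X hs, ← PowerSeries.coe_substAlgHom hs, map_one]
    simp
  obtain ⟨k, rfl | rfl⟩ := n.eq_nat_or_neg
  · exact_mod_cast hnat k
  · have h := PowerSeries.subst_mul hs (PowerSeries.binomialSeries R (-k : ℤ))
      (PowerSeries.binomialSeries R (k : ℤ))
    rw [← PowerSeries.binomialSeries_add, neg_add_cancel, PowerSeries.binomialSeries_zero, hnat,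
      ← PowerSeries.coe_substAlgHom hs, map_one, PowerSeries.coe_substAlgHom hs] at h
    rw [zpow_neg, zpow_natCast, ← Units.mul_eq_one_iff_eq_inv, ← h]

theorem finsum_zbinom_mul_zcoeff {σ : Type*} (u : (MvPowerSeries σ R)ˣ)
    (hu : constantCoeff (u : MvPowerSeries σ R) = 1) (n : ℤ) (e : σ → ℤ) :
    ∑ᶠ k : ℕ, (zbinom n k : R) * zcoeff (((u : MvPowerSeries σ R) - 1) ^ k) e =
      zcoeff ↑(u ^ n) e := by
  have hs : PowerSeries.HasSubst ((u : MvPowerSeries σ R) - 1) :=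
    .of_constantCoeff_zero (by simp [hu])
  by_cases he : e ∈ Set.range intExp
  · obtain ⟨d, rfl⟩ := he
    simp only [zcoeff_intExp]
    rw [← binomialSeries_int n u hu, PowerSeries.coeff_subst hs]
    refine finsum_congr fun k => ?_
    simp [zbinom_eq_choose]
  · simp [zcoeff_of_notMem_range _ he]

theorem zcoeff_X_mul_fin_two (P : MvPowerSeries (Fin 2) R) (n j : ℤ) :
    zcoeff (X 0 * P) ![n, j] = zcoeff P ![n - 1, j] := by
  rw [X, zcoeff_monomial_mul]
  congr 1
  ext i
  fin_cases i <;> simp [intExp]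

theorem zcoeff_subst_shear (C : MvPowerSeries (Fin 2) R) (n j : ℤ) :
    zcoeff (subst ![X 0, X 0 * X 1] C : MvPowerSeries (Fin 2) R) ![n, j] =
      zcoeff C ![n - j, j] := by
  have h := (zcoeff_subst_monomial (R := R)
    ![Finsupp.single (0 : Fin 2) 1, Finsupp.single 0 1 + Finsupp.single 1 1]
    (Φ := fun e => ![e 0 + e 1, e 1])
    (fun e t => by fin_cases t <;> simp [Fin.sum_univ_two])
    (fun e e' h => by
      have h0 := congrFun h 0
      have h1 := congrFun h 1
      ext i
      fin_cases i <;> simp_all) C).1 ![n - j, j]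
  have hm : ![X 0, X 0 * X 1] = fun i => monomial (![Finsupp.single (0 : Fin 2) 1,
      Finsupp.single 0 1 + Finsupp.single 1 1] i) (1 : R) := by
    ext1 i
    fin_cases i <;> simp [X, monomial_mul_monomial]
  rw [hm, ← h]
  simp

theorem izwPow_zcoeff {C : MvPowerSeries (Fin 2) R} {u : (MvPowerSeries (Fin 2) R)ˣ}
    (hu : constantCoeff (u : MvPowerSeries (Fin 2) R) = 1)
    (hC : X 0 * (u : MvPowerSeries (Fin 2) R) = subst ![X 0, X 0 * X 1] C) (n a b : ℤ) :
    izwPow (fun i j => zcoeff C ![i, j]) n a b = zcoeff ↑(u ^ n) ![a + b - n, b] := by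
  classical
  have hh : hzS (fun i j => zcoeff C ![i, j]) =
      fun i j => zcoeff ((u : MvPowerSeries (Fin 2) R) - 1) ![i + j, j] := by
    ext i j
    have h := zcoeff_subst_shear C (i + 1 + j) j
    rw [← hC, zcoeff_X_mul_fin_two, show i + 1 + j - 1 = i + j by ring, add_sub_cancel_right] at h
    rw [hzS, ← h, sub_eq_add_neg _ (1 : MvPowerSeries (Fin 2) R), zcoeff_add, zcoeff_neg,
      zcoeff_one, ← sub_eq_add_neg]
    congr 1
    rw [oneS2]
    congr 1
    simp only [funext_iff, Fin.forall_fin_two, eq_iff_iff]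
    simp
    omega
  rw [izwPow, hh, show a + b - n = a - n + b by ring, ← finsum_zbinom_mul_zcoeff u hu]
  simp only [pow2_zcoeff_shear]

theorem exists_unit_of_leading {C : MvPowerSeries (Fin 2) R} (h0 : constantCoeff C = 0)
    (h1 : zcoeff C ![1, 0] = 1) : ∃ u : (MvPowerSeries (Fin 2) R)ˣ,
    constantCoeff (u : MvPowerSeries (Fin 2) R) = 1 ∧
    X 0 * (u : MvPowerSeries (Fin 2) R) = subst ![X 0, X 0 * X 1] C := by
  have hdvd : X 0 ∣ (subst ![X 0, X 0 * X 1] C : MvPowerSeries (Fin 2) R) := by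
    refine X_dvd_iff.mpr fun m hm => ?_
    rw [← zcoeff_intExp, ← vec2_eq_intExp, zcoeff_subst_shear, hm]
    rcases Nat.eq_zero_or_pos (m 1) with h | h
    · rw [h, ← h0, constantCoeff_eq_zcoeff]
      congr 1
      ext i
      fin_cases i <;> simp
    · exact zcoeff_of_neg _ (i := 0) (by simpa using h)
  obtain ⟨P, hP⟩ := hdvd
  have hconst : constantCoeff P = 1 := by
    have h := zcoeff_subst_shear C 1 0
    rw [hP, zcoeff_X_mul_fin_two, sub_zero, h1] at h
    rw [← h, constantCoeff_eq_zcoeff]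
    congr 1
    ext i
    fin_cases i <;> simp
  obtain ⟨u, rfl⟩ := isUnit_iff_constantCoeff.mpr (hconst ▸ isUnit_one)
  exact ⟨u, hconst, hP.symm⟩

theorem hasSubst_pair {f g : MvPowerSeries τ R} (hf : constantCoeff f = 0)
    (hg : constantCoeff g = 0) : HasSubst ![f, g] :=
  hasSubst_of_constantCoeff_zero fun i => by fin_cases i <;> assumption

theorem subst_subst_pair {υ : Type*} {f g : MvPowerSeries τ R} (hs : HasSubst ![f, g])
    {a : τ → MvPowerSeries υ R} (ha : HasSubst a) (P : MvPowerSeries (Fin 2) R) :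
    subst a (subst ![f, g] P) = subst ![subst a f, subst a g] P := by
  rw [subst_comp_subst_apply hs ha]
  congr 1
  ext1 i
  fin_cases i <;> rfl

theorem zcoeff_subst_pair {f g : MvPowerSeries τ R} (hs : HasSubst ![f, g])
    (P : MvPowerSeries (Fin 2) R) (e : τ → ℤ) :
    zcoeff (subst ![f, g] P) e =
      ∑ᶠ p : ℤ × ℤ, zcoeff P ![p.1, p.2] * zcoeff (f ^ p.1.toNat * g ^ p.2.toNat) e := by
  by_cases he : e ∈ Set.range intExp
  · obtain ⟨c, rfl⟩ := he
    have hinj : Function.Injective fun d : Fin 2 →₀ ℕ => ((d 0 : ℤ), (d 1 : ℤ)) := by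
      intro d d' h
      simp only [Prod.mk.injEq, Nat.cast_inj] at h
      ext i
      fin_cases i
      exacts [h.1, h.2]
    rw [zcoeff_intExp, coeff_subst hs, finsum_eq_finsum_comp hinj]
    · refine finsum_congr fun d => ?_
      rw [vec2_eq_intExp, zcoeff_intExp, zcoeff_intExp, smul_eq_mul,
        Finsupp.prod_fintype _ _ (by simp), Fin.prod_univ_two]
      rfl
    · rintro p hp
      rw [zcoeff_of_notMem_range P, zero_mul]
      rintro ⟨d, hd⟩
      exact hp ⟨d, Prod.ext (congrFun hd 0) (congrFun hd 1)⟩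
  · simp [zcoeff_of_notMem_range _ he]

theorem zcoeff_X_pow_mul_X_pow_mul (k l : ℕ) (P : MvPowerSeries (Fin 3) R) (n i j : ℤ) :
    zcoeff (X 0 ^ k * (X 1 ^ l * P)) ![n, i, j] = zcoeff P ![n - k, i - l, j] := by
  rw [X_pow_eq, X_pow_eq, zcoeff_monomial_mul, zcoeff_monomial_mul]
  congr 1
  ext i
  fin_cases i <;> simp [intExp, Matrix.vecHead, Matrix.vecTail]

theorem zcoeff_X_zero_mul (P : MvPowerSeries (Fin 3) R) (n i j : ℤ) :
    zcoeff (X 0 * P) ![n, i, j] = zcoeff P ![n - 1, i, j] := by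
  simpa using zcoeff_X_pow_mul_X_pow_mul 1 0 P n i j

theorem zcoeff_subst_diagonal (Q : MvPowerSeries (Fin 2) R) (n i j : ℤ) :
    zcoeff (subst ![X 0 * X 1, X 0 * X 2] Q : MvPowerSeries (Fin 3) R) ![n, i, j] =
      if n = i + j then zcoeff Q ![i, j] else 0 := by
  have h := zcoeff_subst_monomial (R := R)
    ![Finsupp.single (0 : Fin 3) 1 + Finsupp.single 1 1,
      Finsupp.single 0 1 + Finsupp.single 2 1]
    (Φ := fun e => ![e 0 + e 1, e 0, e 1])
    (fun e t => by fin_cases t <;> simp [Fin.sum_univ_two])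
    (fun e e' h => by
      ext i
      fin_cases i
      exacts [congrFun h 1, congrFun h 2]) Q
  have hm : ![X 0 * X 1, X 0 * X 2] = fun i => monomial (![Finsupp.single (0 : Fin 3) 1 +
      Finsupp.single 1 1, Finsupp.single 0 1 + Finsupp.single 2 1] i) (1 : R) := by
    ext1 i
    fin_cases i <;> simp [X, monomial_mul_monomial]
  rw [hm]
  split_ifs with hn
  · rw [hn]
    exact h.1 ![i, j]
  · refine h.2 _ ?_
    rintro ⟨e, he⟩
    exact hn (((congrFun he 0).symm.trans
      (congrArg₂ (· + ·) (congrFun he 1) (congrFun he 2))))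

theorem zcoeff_subst_X_X {i j k : Fin 3} (hij : i ≠ j) (hik : i ≠ k) (hjk : j ≠ k)
    (Q : MvPowerSeries (Fin 2) R) (e : Fin 3 → ℤ) :
    zcoeff (subst ![X j, X k] Q : MvPowerSeries (Fin 3) R) e =
      if e i = 0 then zcoeff Q ![e j, e k] else 0 := by
  have h := zcoeff_subst_monomial (R := R) ![Finsupp.single j 1, Finsupp.single k 1]
    (Φ := fun e t => if t = j then e 0 else if t = k then e 1 else 0)
    (fun e t => by
      rcases eq_or_ne t j with rfl | htj
      · simp [Fin.sum_univ_two, hjk.symm]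
      · simp [Fin.sum_univ_two, Finsupp.single_apply, htj, eq_comm])
    (fun e e' h => by
      ext t
      fin_cases t
      · simpa using congrFun h j
      · simpa [hjk.symm] using congrFun h k) Q
  have hm : ![X j, X k] =
      fun t => monomial (![Finsupp.single j 1, Finsupp.single k 1] t) (1 : R) := by
    ext1 t
    fin_cases t <;> simp [X]
  rw [hm]
  split_ifs with hn
  · rw [← h.1]
    congr 1
    ext t
    split_ifs with h1 h2
    · rw [h1]
      rfl
    · rw [h2]
      rfl
    · rw [show t = i by omega, hn]
  · refine h.2 _ ?_
    rintro ⟨e', rfl⟩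
    simp [hij, hik] at hn

theorem zcoeff_subst_swap (Q : MvPowerSeries (Fin 2) R) (i j : ℤ) :
    zcoeff (subst ![X 1, X 0] Q : MvPowerSeries (Fin 2) R) ![i, j] = zcoeff Q ![j, i] := by
  have h := zcoeff_subst_monomial (R := R)
    ![Finsupp.single (1 : Fin 2) 1, Finsupp.single 0 1] (Φ := fun e => ![e 1, e 0])
    (fun e t => by fin_cases t <;> simp [Fin.sum_univ_two])
    (fun e e' h => by
      ext i
      fin_cases i
      exacts [congrFun h 1, congrFun h 0]) Q
  have hm : ![X 1, X 0] = fun i => monomial (![Finsupp.single (1 : Fin 2) 1,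
      Finsupp.single 0 1] i) (1 : R) := by
    ext1 i
    fin_cases i <;> simp [X]
  rw [hm]
  exact h.1 ![j, i]

theorem pow2_swap (f : ℤ → ℤ → R) (k : ℕ) (a b : ℤ) :
    pow2 (fun i j => f j i) k a b = pow2 f k b a := by
  induction k generalizing a b with
  | zero => simp [pow2, oneS2, and_comm]
  | succ k ih =>
    simp only [pow2, mulS2]
    rw [← finsum_comp_equiv (Equiv.prodComm ℤ ℤ)]
    simp [ih]

theorem iwzPow_eq_izwPow_swap (G : ℤ → ℤ → R) (n a b : ℤ) :
    iwzPow G n a b = izwPow (fun i j => G j i) n b a := by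
  have h : hwS G = fun i j => hzS (fun i j => G j i) j i := by
    ext i j
    simp [hwS, hzS, oneS2, and_comm]
  simp only [iwzPow, izwPow, h, pow2_swap]

theorem iwzPowNeg_neg_one (G : ℤ → ℤ → R) (a b : ℤ) :
    iwzPowNeg G (-1) a b = -izwPow (fun i j => -G j i) (-1) b a := by
  have h : hwNegS G = fun i j => hzS (fun i j => -G j i) j i := by
    ext i j
    simp [hwNegS, hzS, oneS2, and_comm]
  simp [iwzPowNeg, izwPow, h, pow2_swap, msign]

/-- The ring homomorphism given by a substitution, on units. -/
noncomputable def substUnits {υ : Type*} {a : σ → MvPowerSeries υ R} (ha : HasSubst a) :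
    (MvPowerSeries σ R)ˣ →* (MvPowerSeries υ R)ˣ :=
  Units.map (substAlgHom (R := R) ha)

theorem coe_substUnits {υ : Type*} {a : σ → MvPowerSeries υ R} (ha : HasSubst a)
    (u : (MvPowerSeries σ R)ˣ) : (substUnits ha u).val = subst a u.val := by
  rw [← coe_substAlgHom (R := R) ha]
  rfl

theorem coe_zpow_sub (γ : (MvPowerSeries σ R)ˣ) (k l : ℕ) :
    ((γ ^ ((k : ℤ) - l) : (MvPowerSeries σ R)ˣ) : MvPowerSeries σ R) = γ ^ k * ↑γ⁻¹ ^ l := by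
  rw [zpow_sub, zpow_natCast, zpow_natCast, ← inv_pow, Units.val_mul, Units.val_pow_eq_pow_val,
    Units.val_pow_eq_pow_val]

theorem subst_neg {υ : Type*} {a : σ → MvPowerSeries υ R} (ha : HasSubst a)
    (P : MvPowerSeries σ R) : subst a (-P) = -subst a P := by
  rw [← coe_substAlgHom (R := R) ha, map_neg]

theorem exists_finsum_izwPow_mul_izwPow {C D : MvPowerSeries (Fin 2) R}
    (hC : constantCoeff C = 0) (hC1 : zcoeff C ![1, 0] = 1)
    (hD : constantCoeff D = 0) (hD1 : zcoeff D ![1, 0] = 1) :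
    ∃ α : (MvPowerSeries (Fin 3) R)ˣ,
      X 0 * (α : MvPowerSeries (Fin 3) R) = subst ![X 0, subst ![X 0 * X 1, X 0 * X 2] C] D ∧
      ∀ e i j, (Function.support fun m => izwPow (fun i j => zcoeff D ![i, j]) (-1) e m *
          izwPow (fun i j => zcoeff C ![i, j]) m i j).Finite ∧
        ∑ᶠ m, izwPow (fun i j => zcoeff D ![i, j]) (-1) e m *
          izwPow (fun i j => zcoeff C ![i, j]) m i j = zcoeff ↑α⁻¹ ![e + i + j + 1, i, j] := by
  obtain ⟨u, hu, hCu⟩ := exists_unit_of_leading hC hC1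
  obtain ⟨ω, hω, hDω⟩ := exists_unit_of_leading hD hD1
  have hdiag : HasSubst ![X 0 * X 1, (X 0 * X 2 : MvPowerSeries (Fin 3) R)] :=
    hasSubst_pair (by simp) (by simp)
  have hshear : HasSubst ![X 0, (X 0 * X 1 : MvPowerSeries (Fin 2) R)] :=
    hasSubst_pair (by simp) (by simp)
  obtain ⟨τ, hτ⟩ : X 0 ∣ (subst ![X 0 * X 1, X 0 * X 2] C : MvPowerSeries (Fin 3) R) := by
    refine X_dvd_iff.mpr fun m hm => ?_
    have hm' : intExp m = ![0, (m 1 : ℤ), (m 2 : ℤ)] := by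
      ext i
      fin_cases i <;> simp [intExp, hm]
    rw [← zcoeff_intExp, hm', zcoeff_subst_diagonal]
    split_ifs with h
    · rw [← hC, constantCoeff_eq_zcoeff]
      congr 1
      ext i
      fin_cases i <;> simp <;> omega
    · rfl
  have hτ0 : constantCoeff τ = 0 := by
    have h := zcoeff_subst_diagonal C 1 0 0
    rw [hτ, zcoeff_X_zero_mul, if_neg (by norm_num)] at h
    rw [← h, constantCoeff_eq_zcoeff]
    congr 1
    ext i
    fin_cases i <;> simp
  have hs : HasSubst ![X 0, τ] := hasSubst_pair (by simp) hτ0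
  refine ⟨substUnits hs ω, ?_, fun e i j => ?_⟩
  · have hX : X 0 = subst ![X 0, τ] (X 0 : MvPowerSeries (Fin 2) R) := by
      rw [subst_X hs]
      rfl
    rw [coe_substUnits]
    nth_rw 1 [hX]
    rw [← subst_mul hs, hDω, subst_subst_pair hshear hs, subst_mul hs, subst_X hs, subst_X hs, hτ]
    rfl
  have hterm (m : ℤ) : izwPow (fun i j => zcoeff D ![i, j]) (-1) e m *
      izwPow (fun i j => zcoeff C ![i, j]) m i j =
      zcoeff ↑ω⁻¹ ![e + m + 1, m] * zcoeff ↑(u ^ m) ![i + j - m, j] := by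
    rw [izwPow_zcoeff hω hDω, izwPow_zcoeff hu hCu, sub_neg_eq_add, zpow_neg_one]
  simp only [hterm]
  refine ⟨(Set.finite_Icc 0 (i + j)).subset fun m hm => ⟨?_, ?_⟩, ?_⟩
  · by_contra h
    exact hm (mul_eq_zero_of_left (zcoeff_of_neg _ (i := 1) (by simpa using h)) _)
  · by_contra h
    exact hm (mul_eq_zero_of_right _ (zcoeff_of_neg _ (i := 0) (by simpa using h)))
  have hpow (k l : ℕ) (n : ℤ) : zcoeff (X 0 ^ k * τ ^ l) ![n, i, j] =
      if n + l - k = i + j then zcoeff (C ^ l) ![i, j] else 0 := by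
    rw [← zcoeff_subst_diagonal, subst_pow hdiag, hτ]
    have h1 := zcoeff_X_pow_mul_X_pow_mul k 0 (τ ^ l) n i j
    have h2 := zcoeff_X_pow_mul_X_pow_mul l 0 (τ ^ l) (n + l - k) i j
    simp only [pow_zero, one_mul, Nat.cast_zero, sub_zero] at h1 h2
    rw [h1, mul_pow, h2]
    congr 2
    ring
  have hupow (l : ℕ) : zcoeff ↑(u ^ (l : ℤ)) ![i + j - l, j] = zcoeff (C ^ l) ![i, j] := by
    have h := zcoeff_subst_shear (C ^ l) (i + j) j
    rw [subst_pow hshear, ← hCu, mul_pow, X_pow_eq, zcoeff_monomial_mul, add_sub_cancel_right] at h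
    rw [← h, zpow_natCast, Units.val_pow_eq_pow_val]
    congr 1
    ext i
    fin_cases i <;> simp [intExp]
  rw [← map_inv, coe_substUnits, zcoeff_subst_pair hs,
    finsum_eq_finsum_comp (g := fun m : ℤ => (e + m + 1, m)) fun _ _ h => congrArg Prod.snd h]
  · refine finsum_congr fun m => ?_
    by_cases hm : m < 0
    · rw [zcoeff_of_neg _ (i := 1) (by simpa using hm), zero_mul, zero_mul]
    by_cases hm' : e + m + 1 < 0
    · rw [zcoeff_of_neg _ (i := 0) (by simpa using hm'), zero_mul, zero_mul]
    obtain ⟨l, rfl⟩ := Int.eq_ofNat_of_zero_le (not_lt.mp hm)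
    rw [hpow, if_pos (by omega), Int.toNat_natCast, hupow]
  · rintro ⟨p, q⟩ hpq
    by_cases hp : p < 0
    · rw [zcoeff_of_neg _ (i := 0) (by simpa using hp), zero_mul]
    by_cases hq : q < 0
    · rw [zcoeff_of_neg _ (i := 1) (by simpa using hq), zero_mul]
    rw [hpow, if_neg, mul_zero]
    intro h
    refine hpq ⟨q, Prod.ext ?_ rfl⟩
    dsimp only at h ⊢
    omega

theorem exists_finsum_iwzPowNeg_mul_izwPow {C D : MvPowerSeries (Fin 2) R}
    (hC : constantCoeff C = 0) (hC1 : zcoeff C ![1, 0] = 1)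
    (hD : constantCoeff D = 0) (hD1 : zcoeff D ![0, 1] = -1) :
    ∃ β : (MvPowerSeries (Fin 3) R)ˣ,
      X 0 * (β : MvPowerSeries (Fin 3) R) = subst ![X 0 * X 1, subst ![X 0, X 0 * X 2] C] D ∧
      ∀ e i j, (Function.support fun m => iwzPowNeg (fun i j => zcoeff D ![i, j]) (-1) e m *
          izwPow (fun i j => zcoeff C ![i, j]) m i j).Finite ∧
        ∑ᶠ m, iwzPowNeg (fun i j => zcoeff D ![i, j]) (-1) e m *
          izwPow (fun i j => zcoeff C ![i, j]) m i j = zcoeff ↑β⁻¹ ![e + i + j + 1, e, j] := by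
  have hswap : HasSubst ![X 1, (X 0 : MvPowerSeries (Fin 2) R)] := hasSubst_pair (by simp) (by simp)
  have hshear : HasSubst ![X 0, (X 0 * X 1 : MvPowerSeries (Fin 2) R)] :=
    hasSubst_pair (by simp) (by simp)
  have hzt : HasSubst ![X 0, (X 2 : MvPowerSeries (Fin 3) R)] :=
    hasSubst_pair (by simp) (by simp)
  have hDswap : (fun i j => -zcoeff D ![j, i]) = fun i j =>
      zcoeff (-subst ![X 1, X 0] D : MvPowerSeries (Fin 2) R) ![i, j] := by
    ext i j
    rw [zcoeff_neg, zcoeff_subst_swap]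
  obtain ⟨u, hu, hCu⟩ := exists_unit_of_leading hC hC1
  obtain ⟨ω, hω, hDω⟩ := exists_unit_of_leading
    (C := (-subst ![X 1, X 0] D : MvPowerSeries (Fin 2) R))
    (by rw [map_neg, constantCoeff_subst_eq_zero hswap (by simp [Fin.forall_fin_two]) hD, neg_zero])
    (by rw [zcoeff_neg, zcoeff_subst_swap, hD1, neg_neg])
  let γ := substUnits hzt u
  have hs : HasSubst ![X 0 * γ.val, X 1 * γ⁻¹.val] :=
    hasSubst_pair (by simp) (by simp)
  refine ⟨-(γ * substUnits hs ω), ?_, fun e i j => ?_⟩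
  · have hγC : X 0 * γ.val = subst ![X 0, X 0 * X 2] C := by
      have h := congrArg (subst ![X 0, (X 2 : MvPowerSeries (Fin 3) R)]) hCu
      rw [subst_mul hzt, subst_subst_pair hshear hzt, subst_mul hzt, subst_X hzt, subst_X hzt,
        ← coe_substUnits hzt] at h
      exact h
    have h := congrArg (subst ![X 0 * γ.val, X 1 * γ⁻¹.val]) hDω
    rw [subst_mul hs, subst_neg hshear, subst_neg hs, subst_subst_pair hswap hshear,
      subst_subst_pair (hasSubst_pair (by simp [subst_X hshear]) (by simp [subst_X hshear])) hs,
      subst_X hshear, subst_X hshear, ← coe_substUnits hs] at h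
    simp only [Matrix.cons_val_zero, Matrix.cons_val_one, subst_mul hs, subst_X hs] at h
    rw [show X 0 * γ.val * (X 1 * γ⁻¹.val) = X 0 * X 1 by
      rw [mul_mul_mul_comm, Units.mul_inv, mul_one]] at h
    rw [Units.val_neg, Units.val_mul, mul_neg, ← mul_assoc, h, neg_neg, hγC]
  have hterm (m : ℤ) : iwzPowNeg (fun i j => zcoeff D ![i, j]) (-1) e m *
      izwPow (fun i j => zcoeff C ![i, j]) m i j =
      -(zcoeff ↑ω⁻¹ ![m + e + 1, e] * zcoeff ↑(u ^ m) ![i + j - m, j]) := by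
    rw [iwzPowNeg_neg_one, hDswap, izwPow_zcoeff hω hDω, izwPow_zcoeff hu hCu, sub_neg_eq_add,
      zpow_neg_one, neg_mul]
  simp only [hterm]
  refine ⟨(Set.finite_Icc (-e - 1) (i + j)).subset fun m hm => ⟨?_, ?_⟩, ?_⟩
  · by_contra h
    exact hm (neg_eq_zero.mpr (mul_eq_zero_of_left
      (zcoeff_of_neg _ (i := 0) (by simp at h ⊢; omega)) _))
  · by_contra h
    exact hm (neg_eq_zero.mpr (mul_eq_zero_of_right _
      (zcoeff_of_neg _ (i := 0) (by simpa using h))))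
  have hX1 : ((-(γ * substUnits hs ω))⁻¹ : (MvPowerSeries (Fin 3) R)ˣ) =
      (-(γ * substUnits hs ω)⁻¹ : (MvPowerSeries (Fin 3) R)ˣ) := by
    rw [inv_neg]
  have hshift : zcoeff ↑(γ * substUnits hs ω)⁻¹ ![e + i + j + 1, e, j] =
      zcoeff (subst ![X 0 * γ.val, X 1 * γ⁻¹.val]
        (X 1 * ω⁻¹.val)) ![e + i + j + 1, e + 1, j] := by
    have h := zcoeff_X_pow_mul_X_pow_mul 0 1 (γ * substUnits hs ω)⁻¹.val
      (e + i + j + 1) (e + 1) j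
    simp only [pow_zero, one_mul, pow_one, Nat.cast_zero, sub_zero, Nat.cast_one,
      add_sub_cancel_right] at h
    rw [← h, subst_mul hs, subst_X hs, ← coe_substUnits hs, map_inv, mul_inv, Units.val_mul,
      ← mul_assoc]
    rfl
  have hpow (k l : ℕ) (n t : ℤ) :
      zcoeff ((X 0 * γ.val) ^ k * (X 1 * γ⁻¹.val) ^ l) ![n, t, j] =
        if t - l = 0 then zcoeff ↑(u ^ ((k : ℤ) - l)) ![n - k, j] else 0 := by
    have h := zcoeff_subst_X_X (i := 1) (j := 0) (k := 2) (by decide) (by decide) (by decide)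
      (↑(u ^ ((k : ℤ) - l)) : MvPowerSeries (Fin 2) R) ![n - k, t - l, j]
    rw [← coe_substUnits hzt, map_zpow, coe_zpow_sub, ← zcoeff_X_pow_mul_X_pow_mul] at h
    refine Eq.trans ?_ h
    rw [mul_pow, mul_pow]
    congr 1
    ring
  have hcoeff (p q : ℤ) : zcoeff (X 1 * ω⁻¹.val) ![p, q] =
      zcoeff ↑ω⁻¹ ![p, q - 1] := by
    rw [X, zcoeff_monomial_mul]
    congr 1
    ext i
    fin_cases i <;> simp [intExp]
  rw [finsum_neg_distrib, hX1, Units.val_neg, zcoeff_neg, hshift, zcoeff_subst_pair hs,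
    finsum_eq_finsum_comp (g := fun m : ℤ => (m + e + 1, e + 1))
      fun m m' h => by simpa using congrArg Prod.fst h]
  · congr 1
    refine finsum_congr fun m => ?_
    rw [hcoeff, add_sub_cancel_right]
    by_cases he : e < 0
    · rw [zcoeff_of_neg _ (i := 1) (by simpa using he), zero_mul, zero_mul]
    by_cases hm : m + e + 1 < 0
    · rw [zcoeff_of_neg _ (i := 0) (by simpa using hm), zero_mul, zero_mul]
    rw [hpow, Int.toNat_of_nonneg (by omega), Int.toNat_of_nonneg (by omega), if_pos (by omega)]
    rw [show m + e + 1 - (e + 1) = m by ring, show e + i + j + 1 - (m + e + 1) = i + j - m by ring]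
  · rintro ⟨p, q⟩ hpq
    rw [hcoeff]
    by_cases hp : p < 0
    · rw [zcoeff_of_neg _ (i := 0) (by simpa using hp), zero_mul]
    by_cases hq : q - 1 < 0
    · rw [zcoeff_of_neg _ (i := 1) (by simpa using hq), zero_mul]
    rw [hpow, if_neg, mul_zero]
    intro h
    refine hpq ⟨p - e - 1, Prod.ext ?_ ?_⟩ <;> dsimp only at h ⊢ <;> omega

theorem ext_zcoeff {P Q : MvPowerSeries σ R} (h : ∀ e, zcoeff P e = zcoeff Q e) : P = Q := by
  ext d
  rw [← zcoeff_intExp, h, zcoeff_intExp]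

theorem zcoeff_subst_X_pair [DecidableEq τ] {i : τ} {g : MvPowerSeries τ R}
    (hg : constantCoeff g = 0) (hgi : ∀ n e, e i ≠ 0 → zcoeff (g ^ n) e = 0)
    (P : MvPowerSeries (Fin 2) R) (e : τ → ℤ) :
    zcoeff (subst ![X i, g] P) e = ∑ᶠ n : ℕ, zcoeff P ![e i, n] *
      zcoeff (g ^ n) fun t => if t = i then 0 else e t := by
  rw [zcoeff_subst_pair (hasSubst_pair (by simp) hg),
    finsum_eq_finsum_comp (g := fun n : ℕ => (e i, (n : ℤ))) fun n n' h => by simpa using h]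
  · refine finsum_congr fun n => ?_
    by_cases he : e i < 0
    · rw [zcoeff_of_neg _ (i := 0) (by simpa using he), zero_mul, zero_mul]
    rw [Int.toNat_natCast, X_pow_eq, zcoeff_monomial_mul]
    congr 2
    ext t
    rcases eq_or_ne t i with rfl | ht
    · simp [intExp]
      omega
    · simp [intExp, ht]
  · rintro ⟨p, q⟩ hpq
    by_cases hp : p < 0
    · rw [zcoeff_of_neg _ (i := 0) (by simpa using hp), zero_mul]
    by_cases hq : q < 0
    · rw [zcoeff_of_neg _ (i := 1) (by simpa using hq), zero_mul]
    rw [X_pow_eq, zcoeff_monomial_mul, hgi, mul_zero]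
    intro h
    refine hpq ⟨q.toNat, Prod.ext ?_ ?_⟩ <;> simp [intExp] at h ⊢ <;> omega

theorem zcoeff_subst_unit {i j : Fin 2} (hij : i ≠ j) (Q : PowerSeries R) (e : Fin 2 → ℤ) :
    zcoeff (PowerSeries.subst (X j : MvPowerSeries (Fin 2) R) Q) e =
      if e i = 0 then zcoeff Q (fun _ => e j) else 0 := by
  have h := zcoeff_subst_monomial (R := R) (fun _ : Unit => Finsupp.single j 1)
    (Φ := fun e t => if t = j then e () else 0)
    (fun e t => by simp [Finsupp.single_apply, eq_comm])
    (fun e e' h => by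
      ext t
      simpa using congrFun h j) Q
  rw [PowerSeries.subst, show (fun _ => X j : Unit → MvPowerSeries (Fin 2) R) =
    fun _ => monomial (Finsupp.single j 1) 1 from rfl]
  split_ifs with hn
  · rw [← h.1]
    congr 1
    ext t
    split_ifs with h1
    · rw [h1]
    · rw [show t = i by omega, hn]
  · refine h.2 _ ?_
    rintro ⟨e', rfl⟩
    simp [hij] at hn

namespace FormalGroupLaw

variable (𝓕 : FormalGroupLaw R)

/-- The power series `F(z,w)`. -/
def series : MvPowerSeries (Fin 2) R := ofCoeff2 𝓕.F

theorem zcoeff_series (i j : ℤ) : zcoeff 𝓕.series ![i, j] = 𝓕.F i j :=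
  zcoeff_ofCoeff2 𝓕.F_supp i j

theorem constantCoeff_series : constantCoeff 𝓕.series = 0 :=
  𝓕.F_modw 0

theorem subst_swap_series : subst ![X 1, X 0] 𝓕.series = 𝓕.series := by
  refine ext_zcoeff fun e => ?_
  rw [show e = ![e 0, e 1] by ext i; fin_cases i <;> rfl, zcoeff_subst_swap, zcoeff_series,
    zcoeff_series, 𝓕.F_comm]

theorem subst_pair_comm {f g : MvPowerSeries τ R} (hf : constantCoeff f = 0)
    (hg : constantCoeff g = 0) : subst ![f, g] 𝓕.series = subst ![g, f] 𝓕.series := by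
  have hs : HasSubst ![g, f] := hasSubst_pair hg hf
  conv_rhs => rw [← 𝓕.subst_swap_series]
  rw [subst_subst_pair (hasSubst_pair (by simp) (by simp)) hs, subst_X hs, subst_X hs]
  rfl

theorem pow2_F (k : ℕ) (a b : ℤ) : pow2 𝓕.F k a b = zcoeff (𝓕.series ^ k) ![a, b] := by
  have h := congrFun₂ (pow2_zcoeff_pair 𝓕.series k) a b
  simpa only [zcoeff_series] using h

theorem zcoeff_subst_X_subst_X_X {i j k : Fin 3} (hij : i ≠ j) (hik : i ≠ k) (hjk : j ≠ k)
    (e : Fin 3 → ℤ) :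
    zcoeff (subst ![X i, subst ![X j, X k] 𝓕.series] 𝓕.series : MvPowerSeries (Fin 3) R) e =
      ∑ᶠ n : ℕ, 𝓕.F (e i) n * pow2 𝓕.F n (e j) (e k) := by
  have hs : HasSubst ![X j, (X k : MvPowerSeries (Fin 3) R)] := hasSubst_pair (by simp) (by simp)
  rw [zcoeff_subst_X_pair
    (constantCoeff_subst_eq_zero hs (by simp [Fin.forall_fin_two]) 𝓕.constantCoeff_series)]
  · refine finsum_congr fun n => ?_
    rw [zcoeff_series, ← subst_pow hs, zcoeff_subst_X_X hij hik hjk, pow2_F]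
    simp only [if_true, if_neg hij.symm, if_neg hik.symm]
  · intro n e he
    rw [← subst_pow hs, zcoeff_subst_X_X hij hik hjk, if_neg he]

/-- The inverse power series `ι(z)`. -/
def invSeries : PowerSeries R := PowerSeries.mk fun n => 𝓕.inv n

theorem zcoeff_invSeries (n : ℤ) : zcoeff 𝓕.invSeries (fun _ => n) = 𝓕.inv n := by
  by_cases h : n < 0
  · rw [zcoeff_of_neg _ (i := ()) h, 𝓕.inv_supp n (by omega)]
  · obtain ⟨m, rfl⟩ := Int.eq_ofNat_of_zero_le (not_lt.mp h)
    rw [show (fun _ => (m : ℤ)) = intExp (Finsupp.single () m) by ext; simp [intExp],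
      zcoeff_intExp]
    exact PowerSeries.coeff_mk _ _

theorem constantCoeff_invSeries : constantCoeff 𝓕.invSeries = 0 := by
  rw [constantCoeff_eq_zcoeff]
  exact (𝓕.zcoeff_invSeries 0).trans (𝓕.inv_supp 0 (by norm_num))

theorem pow1_inv (k : ℕ) (a : ℤ) : pow1 𝓕.inv k a = zcoeff (𝓕.invSeries ^ k) fun _ => a := by
  have h := congrFun (pow1_zcoeff 𝓕.invSeries k) a
  simpa only [zcoeff_invSeries] using h

theorem subst_X_invSeries :
    (subst ![PowerSeries.X, 𝓕.invSeries] 𝓕.series : PowerSeries R) = 0 := by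
  refine ext_zcoeff fun e => ?_
  have hinj : Function.Injective fun p : ℤ × ℕ => (p.1, (p.2 : ℤ)) := fun p q h => by
    simpa [Prod.ext_iff] using h
  rw [show zcoeff (0 : PowerSeries R) e = 0 from zcoeff_zero e,
    ← 𝓕.inv_eq (e ()), zcoeff_subst_pair (hasSubst_pair (f := (PowerSeries.X : PowerSeries R))
      (constantCoeff_X _) 𝓕.constantCoeff_invSeries),
    finsum_eq_finsum_comp hinj]
  · refine finsum_congr fun p => ?_
    rw [zcoeff_series, pow1_inv, Int.toNat_natCast]
    by_cases hp : p.1 < 0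
    · rw [𝓕.F_supp _ _ (.inl hp), zero_mul, zero_mul]
    rw [PowerSeries.X, X_pow_eq, zcoeff_monomial_mul]
    congr 2
    ext
    simp [intExp]
    omega
  · rintro ⟨p, q⟩ hpq
    rw [zcoeff_of_neg _ (i := 1), zero_mul]
    by_contra h
    exact hpq ⟨(p, q.toNat), Prod.ext rfl (by simpa using h)⟩

/-- The associated formal group of Mathlib. -/
def toFormalGroup : FormalGroup R where
  toPowerSeries := 𝓕.series
  zero_constantCoeff := 𝓕.constantCoeff_series
  lin_coeff_X := by
    rw [← zcoeff_intExp, ← vec2_eq_intExp, zcoeff_series]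
    simp [𝓕.F_modw]
  lin_coeff_Y := by
    rw [← zcoeff_intExp, ← vec2_eq_intExp, zcoeff_series, 𝓕.F_comm]
    simp [𝓕.F_modw]
  assoc := by
    refine ext_zcoeff fun e => ?_
    have h01 : HasSubst ![X 0, (X 1 : MvPowerSeries (Fin 3) R)] :=
      hasSubst_pair (by simp) (by simp)
    rw [𝓕.subst_pair_comm
        (constantCoeff_subst_eq_zero h01 (by simp [Fin.forall_fin_two]) 𝓕.constantCoeff_series)
        (by simp),
      zcoeff_subst_X_subst_X_X _ (by decide) (by decide) (by decide),
      zcoeff_subst_X_subst_X_X _ (by decide) (by decide) (by decide), ← 𝓕.F_assoc (e 0)]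
    simp only [𝓕.F_comm (e 2)]

/-- The power series `F(z,ι(w))`. -/
noncomputable def diffSeries : MvPowerSeries (Fin 2) R :=
  subst ![X 0, PowerSeries.subst (X 1 : MvPowerSeries (Fin 2) R) 𝓕.invSeries] 𝓕.series

theorem constantCoeff_subst_invSeries {f : MvPowerSeries τ R} (hf : constantCoeff f = 0) :
    constantCoeff (PowerSeries.subst f 𝓕.invSeries) = 0 :=
  constantCoeff_subst_eq_zero (PowerSeries.HasSubst.of_constantCoeff_zero hf).const
    (fun _ => hf) 𝓕.constantCoeff_invSeries

theorem zcoeff_diffSeries (i j : ℤ) : zcoeff 𝓕.diffSeries ![i, j] = 𝓕.Fzi i j := by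
  have hs : PowerSeries.HasSubst (X 1 : MvPowerSeries (Fin 2) R) :=
    .of_constantCoeff_zero (by simp)
  rw [diffSeries, zcoeff_subst_X_pair (𝓕.constantCoeff_subst_invSeries (by simp))]
  · refine finsum_congr fun n => ?_
    rw [zcoeff_series, ← PowerSeries.subst_pow hs, zcoeff_subst_unit (i := 0) (by decide), pow1_inv]
    rfl
  · intro n e he
    rw [← PowerSeries.subst_pow hs, zcoeff_subst_unit (i := 0) (by decide), if_neg he]


theorem zcoeff_series_one_zero : zcoeff 𝓕.series ![1, 0] = 1 := by
  simp [zcoeff_series, F_modw]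

theorem F_zero_left (j : ℤ) : 𝓕.F 0 j = if j = 1 then 1 else 0 := by
  rw [F_comm, F_modw]

theorem constantCoeff_diffSeries : constantCoeff 𝓕.diffSeries = 0 :=
  constantCoeff_subst_eq_zero
    (hasSubst_pair (by simp) (𝓕.constantCoeff_subst_invSeries (by simp)))
    (fun i => by
      fin_cases i
      exacts [constantCoeff_X _, 𝓕.constantCoeff_subst_invSeries (by simp)])
    𝓕.constantCoeff_series

theorem zcoeff_diffSeries_one_zero : zcoeff 𝓕.diffSeries ![1, 0] = 1 := by
  rw [zcoeff_diffSeries, Fzi, finsum_eq_single _ 0]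
  · simp [F_modw, pow1, oneS]
  · intro m hm
    have h : zcoeff (𝓕.invSeries ^ m) (fun _ => 0) = 0 := by
      refine (constantCoeff_eq_zcoeff (𝓕.invSeries ^ m)).symm.trans ?_
      rw [map_pow, constantCoeff_invSeries, zero_pow hm]
    rw [pow1_inv, h, mul_zero]

theorem zcoeff_diffSeries_zero_one : zcoeff 𝓕.diffSeries ![0, 1] = -1 := by
  rw [zcoeff_diffSeries, Fzi, finsum_eq_single _ 1]
  · rw [pow1_inv, pow_one, zcoeff_invSeries, inv_one, F_zero_left]
    simp
  · intro m hm
    rw [F_zero_left, if_neg (by exact_mod_cast hm), zero_mul]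

theorem series_eq : ∃ g, 𝓕.series = X 0 + X 1 + X 0 * (X 1 * g) := by
  have hg (i j : ℤ) (h : i < 0 ∨ j < 0) :
      (if i < 0 ∨ j < 0 then 0 else 𝓕.F (i + 1) (j + 1)) = 0 := if_pos h
  refine ⟨ofCoeff2 fun i j => if i < 0 ∨ j < 0 then 0 else 𝓕.F (i + 1) (j + 1),
    ext_zcoeff fun e => ?_⟩
  obtain ⟨i, j, rfl⟩ : ∃ i j, e = ![i, j] := ⟨e 0, e 1, by ext i; fin_cases i <;> rfl⟩
  have hX0 (P : MvPowerSeries (Fin 2) R) (i j : ℤ) :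
      zcoeff (X 0 * P) ![i, j] = zcoeff P ![i - 1, j] :=
    (zcoeff_monomial_mul _ _ _).trans <| congrArg _ <| by
      ext k
      fin_cases k <;> simp [intExp]
  have hX1 (P : MvPowerSeries (Fin 2) R) (i j : ℤ) :
      zcoeff (X 1 * P) ![i, j] = zcoeff P ![i, j - 1] :=
    (zcoeff_monomial_mul _ _ _).trans <| congrArg _ <| by
      ext k
      fin_cases k <;> simp [intExp]
  rw [zcoeff_add, zcoeff_add, hX0, hX1, zcoeff_ofCoeff2 hg, ← mul_one (X 0), hX0,
    ← mul_one (X 1), hX1, zcoeff_one, zcoeff_one, zcoeff_series, sub_add_cancel, sub_add_cancel]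
  simp only [funext_iff, Fin.forall_fin_two, Matrix.cons_val_zero, Matrix.cons_val_one,
    Pi.zero_apply, Matrix.cons_val_fin_one]
  rcases lt_trichotomy i 0 with hi | rfl | hi
  · rw [𝓕.F_supp _ _ (.inl hi)]
    split_ifs <;> first | omega | simp
  · rw [F_zero_left]
    split_ifs <;> first | omega | simp
  rcases lt_trichotomy j 0 with hj | rfl | hj
  · rw [𝓕.F_supp _ _ (.inr hj)]
    split_ifs <;> first | omega | simp
  · rw [F_modw]
    split_ifs <;> first | omega | simp
  · split_ifs <;> first | omega | simp

instance : 𝓕.toFormalGroup.IsComm := ⟨𝓕.subst_swap_series.symm⟩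

noncomputable instance : Neg (𝓕.toFormalGroup.Point σ) where
  neg x := ⟨PowerSeries.subst x.val 𝓕.invSeries,
    IsNilpotent_subst (PowerSeries.HasSubst.const x.prop)
      (𝓕.constantCoeff_invSeries ▸ IsNilpotent.zero)⟩

noncomputable instance : AddCommGroup (𝓕.toFormalGroup.Point σ) where
  add_comm := add_comm
  zsmul := zsmulRec
  neg_add_cancel x := by
    have hx : HasSubst fun _ : Unit => x.val := PowerSeries.HasSubst.const x.prop
    have hs := hasSubst_pair (f := (PowerSeries.X : PowerSeries R)) (constantCoeff_X _)
      𝓕.constantCoeff_invSeries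
    have h := congrArg (subst fun _ : Unit => x.val) 𝓕.subst_X_invSeries
    rw [subst_subst_pair hs hx, PowerSeries.X, subst_X hx, ← coe_substAlgHom (R := R) hx,
      map_zero, coe_substAlgHom] at h
    rw [add_comm]
    exact Subtype.ext h

/-- A power series without constant term, as a point of the associated formal group. -/
def point (f : MvPowerSeries σ R) (hf : constantCoeff f = 0) : 𝓕.toFormalGroup.Point σ :=
  ⟨f, PowerSeries.HasSubst.of_constantCoeff_zero hf⟩

theorem constantCoeff_subst_pair {f g : MvPowerSeries σ R} (hf : constantCoeff f = 0)
    (hg : constantCoeff g = 0) {P : MvPowerSeries (Fin 2) R} (hP : constantCoeff P = 0) :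
    constantCoeff (subst ![f, g] P) = 0 :=
  constantCoeff_subst_eq_zero (hasSubst_pair hf hg) (by simp [Fin.forall_fin_two, hf, hg]) hP

theorem point_add_point {f g : MvPowerSeries σ R} (hf : constantCoeff f = 0)
    (hg : constantCoeff g = 0) : 𝓕.point f hf + 𝓕.point g hg =
      𝓕.point (subst ![f, g] 𝓕.series) (constantCoeff_subst_pair hf hg 𝓕.constantCoeff_series) :=
  rfl

theorem point_sub_point {f g : MvPowerSeries σ R} (hf : constantCoeff f = 0)
    (hg : constantCoeff g = 0) : 𝓕.point f hf - 𝓕.point g hg =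
      𝓕.point (subst ![f, g] 𝓕.diffSeries)
        (constantCoeff_subst_pair hf hg 𝓕.constantCoeff_diffSeries) := by
  have hs : HasSubst ![f, g] := hasSubst_pair hf hg
  have h1 : HasSubst fun _ : Unit => (X 1 : MvPowerSeries (Fin 2) R) :=
    hasSubst_of_constantCoeff_zero (by simp)
  refine Subtype.ext ?_
  change subst ![f, PowerSeries.subst g 𝓕.invSeries] 𝓕.series = subst ![f, g] 𝓕.diffSeries
  rw [diffSeries, subst_subst_pair
    (hasSubst_pair (by simp) (𝓕.constantCoeff_subst_invSeries (by simp))) hs, subst_X hs,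
    PowerSeries.subst, PowerSeries.subst, subst_comp_subst_apply h1 hs, subst_X hs]
  rfl

theorem subst_series_diffSeries :
    subst ![subst ![X 0, subst ![X 1, X 2] 𝓕.diffSeries] 𝓕.diffSeries,
      (subst ![X 1, subst ![X 0, X 2] 𝓕.series] 𝓕.diffSeries : MvPowerSeries (Fin 3) R)]
      𝓕.series = 0 := by
  have hX (i : Fin 3) : constantCoeff (X i : MvPowerSeries (Fin 3) R) = 0 := constantCoeff_X i
  have h : (𝓕.point (X 0) (hX 0) - (𝓕.point (X 1) (hX 1) - 𝓕.point (X 2) (hX 2))) +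
      (𝓕.point (X 1) (hX 1) - (𝓕.point (X 0) (hX 0) + 𝓕.point (X 2) (hX 2))) = 0 := by
    abel
  simp only [point_sub_point, point_add_point] at h
  exact congrArg Subtype.val h

theorem exists_add_eq_mul : ∃ T : MvPowerSeries (Fin 3) R,
    subst ![X 0, subst ![X 1, X 2] 𝓕.diffSeries] 𝓕.diffSeries +
      subst ![X 1, subst ![X 0, X 2] 𝓕.series] 𝓕.diffSeries =
    subst ![X 0, subst ![X 1, X 2] 𝓕.diffSeries] 𝓕.diffSeries *
      (subst ![X 1, subst ![X 0, X 2] 𝓕.series] 𝓕.diffSeries * T) := by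
  have hX (i : Fin 3) : constantCoeff (X i : MvPowerSeries (Fin 3) R) = 0 := constantCoeff_X i
  have h := 𝓕.subst_series_diffSeries
  have hs := hasSubst_pair
    (constantCoeff_subst_pair (hX 0) (constantCoeff_subst_pair (hX 1) (hX 2)
      𝓕.constantCoeff_diffSeries) 𝓕.constantCoeff_diffSeries)
    (constantCoeff_subst_pair (hX 1) (constantCoeff_subst_pair (hX 0) (hX 2)
      𝓕.constantCoeff_series) 𝓕.constantCoeff_diffSeries)
  obtain ⟨g, hg⟩ := 𝓕.series_eq
  generalize (subst ![X 0, subst ![X 1, X 2] 𝓕.diffSeries] 𝓕.diffSeries : MvPowerSeries (Fin 3) R)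
    = H at h hs ⊢
  generalize (subst ![X 1, subst ![X 0, X 2] 𝓕.series] 𝓕.diffSeries : MvPowerSeries (Fin 3) R)
    = K at h hs ⊢
  rw [hg, subst_add hs, subst_add hs, subst_mul hs, subst_mul hs, subst_X hs, subst_X hs] at h
  refine ⟨-subst ![H, K] g, ?_⟩
  rw [mul_neg, mul_neg]
  exact eq_neg_of_add_eq_zero_left h

end FormalGroupLaw

theorem inv_add_inv_eq {S : Type*} [CommRing S] {x t : S} (hx : x ∈ nonZeroDivisors S) {α β : Sˣ}
    (h : x * α.val + x * β.val = x * α.val * (x * β.val * t)) :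
    α⁻¹.val + β⁻¹.val = x * t := by
  have h' : α.val + β.val = α.val * (x * β.val * t) :=
    (mul_cancel_left_mem_nonZeroDivisors hx).mp (by linear_combination h)
  linear_combination α⁻¹.val * β⁻¹.val * h' - (β⁻¹.val - x * t * β.val * β⁻¹.val) * α.mul_inv
    - (α⁻¹.val - x * t) * β.mul_inv

theorem inv_add_inv_eq_X_mul_subst {H K T : MvPowerSeries (Fin 3) R} (h : H + K = H * (K * T))
    {s : Fin 3 → MvPowerSeries (Fin 3) R} (hs : HasSubst s) {α β : (MvPowerSeries (Fin 3) R)ˣ}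
    (hH : X 0 * α.val = subst s H) (hK : X 0 * β.val = subst s K) :
    α⁻¹.val + β⁻¹.val = X 0 * subst s T := by
  refine inv_add_inv_eq (S := MvPowerSeries (Fin 3) R) X_mem_nonzeroDivisors ?_
  rw [hH, hK, ← subst_add hs, h, subst_mul hs, subst_mul hs]

theorem zcoeff_subst_homogenize_one_two (T : MvPowerSeries (Fin 3) R) (a b c : ℤ) :
    zcoeff (subst ![X 0, X 0 * X 1, X 0 * X 2] T : MvPowerSeries (Fin 3) R) ![a + b + c, b, c] =
      zcoeff T ![a, b, c] := by
  have h := zcoeff_subst_monomial (R := R)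
    ![Finsupp.single (0 : Fin 3) 1, Finsupp.single 0 1 + Finsupp.single 1 1,
      Finsupp.single 0 1 + Finsupp.single 2 1]
    (Φ := fun e => ![e 0 + e 1 + e 2, e 1, e 2])
    (fun e t => by fin_cases t <;> simp [Fin.sum_univ_three])
    (fun e e' h => by
      have h0 : e 0 + e 1 + e 2 = e' 0 + e' 1 + e' 2 := congrFun h 0
      have h1 : e 1 = e' 1 := congrFun h 1
      have h2 : e 2 = e' 2 := congrFun h 2
      ext i
      fin_cases i
      exacts [by simp; omega, h1, h2]) T
  have hm : ![X 0, X 0 * X 1, X 0 * X 2] = fun i => monomial (![Finsupp.single (0 : Fin 3) 1,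
      Finsupp.single 0 1 + Finsupp.single 1 1, Finsupp.single 0 1 + Finsupp.single 2 1] i)
      (1 : R) := by
    ext1 i
    fin_cases i <;> simp [X, monomial_mul_monomial]
  rw [hm]
  exact h.1 ![a, b, c]

theorem zcoeff_subst_homogenize_zero_two (T : MvPowerSeries (Fin 3) R) (a b c : ℤ) :
    zcoeff (subst ![X 0 * X 1, X 0, X 0 * X 2] T : MvPowerSeries (Fin 3) R) ![a + b + c, a, c] =
      zcoeff T ![a, b, c] := by
  have h := zcoeff_subst_monomial (R := R)
    ![Finsupp.single (0 : Fin 3) 1 + Finsupp.single 1 1, Finsupp.single 0 1,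
      Finsupp.single 0 1 + Finsupp.single 2 1]
    (Φ := fun e => ![e 0 + e 1 + e 2, e 0, e 2])
    (fun e t => by fin_cases t <;> simp [Fin.sum_univ_three])
    (fun e e' h => by
      have h0 : e 0 + e 1 + e 2 = e' 0 + e' 1 + e' 2 := congrFun h 0
      have h1 : e 0 = e' 0 := congrFun h 1
      have h2 : e 2 = e' 2 := congrFun h 2
      ext i
      fin_cases i
      exacts [h1, by simp; omega, h2]) T
  have hm : ![X 0 * X 1, X 0, X 0 * X 2] = fun i => monomial (![Finsupp.single (0 : Fin 3) 1 +
      Finsupp.single 1 1, Finsupp.single 0 1, Finsupp.single 0 1 + Finsupp.single 2 1] i)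
      (1 : R) := by
    ext1 i
    fin_cases i <;> simp [X, monomial_mul_monomial]
  rw [hm]
  exact h.1 ![a, b, c]

theorem hasSubst_triple {f g h : MvPowerSeries τ R} (hf : constantCoeff f = 0)
    (hg : constantCoeff g = 0) (hh : constantCoeff h = 0) : HasSubst ![f, g, h] :=
  hasSubst_of_constantCoeff_zero fun i => by fin_cases i <;> assumption

/-- Nested pairs of variables, under a substitution. -/
theorem subst_X_subst_X_X (i j k : Fin 3) {a : Fin 3 → MvPowerSeries τ R} (ha : HasSubst a)
    {C : MvPowerSeries (Fin 2) R} (hC : constantCoeff C = 0) (D : MvPowerSeries (Fin 2) R) :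
    subst a (subst ![X i, subst ![X j, X k] C] D : MvPowerSeries (Fin 3) R) =
      subst ![a i, subst ![a j, a k] C] D := by
  have hjk : HasSubst ![X j, (X k : MvPowerSeries (Fin 3) R)] := hasSubst_pair (by simp) (by simp)
  rw [subst_subst_pair (hasSubst_pair (by simp)
    (constantCoeff_subst_eq_zero hjk (by simp [Fin.forall_fin_two]) hC)) ha,
    subst_subst_pair hjk ha, subst_X ha, subst_X ha, subst_X ha]

theorem FormalGroupLaw.exists_zcoeff_inv_add_inv (𝓕 : FormalGroupLaw R) :
    ∃ T : MvPowerSeries (Fin 3) R,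
      (∀ α β : (MvPowerSeries (Fin 3) R)ˣ,
        X 0 * α.val = subst ![X 0, subst ![X 0 * X 1, X 0 * X 2] 𝓕.diffSeries] 𝓕.diffSeries →
        X 0 * β.val = subst ![X 0 * X 1, subst ![X 0, X 0 * X 2] 𝓕.series] 𝓕.diffSeries →
        ∀ a b c, zcoeff α⁻¹.val ![a + b + c + 1, b, c] + zcoeff β⁻¹.val ![a + b + c + 1, b, c] =
          zcoeff T ![a, b, c]) ∧
      ∀ α β : (MvPowerSeries (Fin 3) R)ˣ,
        X 0 * α.val = subst ![X 0 * X 1, subst ![X 0, X 0 * X 2] 𝓕.diffSeries] 𝓕.diffSeries →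
        X 0 * β.val = subst ![X 0, subst ![X 0 * X 1, X 0 * X 2] 𝓕.series] 𝓕.diffSeries →
        ∀ a b c, zcoeff α⁻¹.val ![a + b + c + 1, a, c] + zcoeff β⁻¹.val ![a + b + c + 1, a, c] =
          zcoeff T ![a, b, c] := by
  have h1 : HasSubst ![X 0, X 0 * X 1, (X 0 * X 2 : MvPowerSeries (Fin 3) R)] :=
    hasSubst_triple (by simp) (by simp) (by simp)
  have h2 : HasSubst ![X 0 * X 1, X 0, (X 0 * X 2 : MvPowerSeries (Fin 3) R)] :=
    hasSubst_triple (by simp) (by simp) (by simp)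
  obtain ⟨T, hT⟩ := 𝓕.exists_add_eq_mul
  refine ⟨T, fun α β hα hβ a b c => ?_, fun α β hα hβ a b c => ?_⟩
  · rw [← zcoeff_add, inv_add_inv_eq_X_mul_subst hT h1
      (hα.trans (subst_X_subst_X_X 0 1 2 h1 𝓕.constantCoeff_diffSeries _).symm)
      (hβ.trans (subst_X_subst_X_X 1 0 2 h1 𝓕.constantCoeff_series _).symm),
      zcoeff_X_zero_mul, add_sub_cancel_right, zcoeff_subst_homogenize_one_two]
  · rw [← zcoeff_add, inv_add_inv_eq_X_mul_subst hT h2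
      (hα.trans (subst_X_subst_X_X 0 1 2 h2 𝓕.constantCoeff_diffSeries _).symm)
      (hβ.trans (subst_X_subst_X_X 1 0 2 h2 𝓕.constantCoeff_series _).symm),
      zcoeff_X_zero_mul, add_sub_cancel_right, zcoeff_subst_homogenize_zero_two]

theorem finsum_delta_mul (𝓕 : FormalGroupLaw R) {e : ℤ} {g : ℤ → R} {x y : R}
    (hx : (Function.support fun m => izwPow 𝓕.Fzi (-1) e m * g m).Finite ∧
      ∑ᶠ m, izwPow 𝓕.Fzi (-1) e m * g m = x)
    (hy : (Function.support fun m => iwzPowNeg 𝓕.Fzi (-1) e m * g m).Finite ∧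
      ∑ᶠ m, iwzPowNeg 𝓕.Fzi (-1) e m * g m = y) :
    ∑ᶠ m, 𝓕.delta e m * g m = x - y := by
  simp only [FormalGroupLaw.delta, sub_mul]
  rw [finsum_sub_distrib hx.1 hy.1, hx.2, hy.2]

end Expansion

/-- `i_{z1,z0} z2⁻¹δ_F(F(z1,ιz0)/z2) = i_{z2,z0} z1⁻¹δ_F(F(z0,z2)/z1)`,
coefficient of `z0^e0 z1^e1 z2^e2` (the first substitution expands powers of `F(z1,ιz0)`
in `R((z1))⟦z0⟧`, the second expands powers of `F(z0,z2)` in `R((z2))⟦z0⟧`). -/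
theorem deltaF_swap (R : Type*) [CommRing R] (𝓕 : FormalGroupLaw R) (e0 e1 e2 : ℤ) :
    (∑ᶠ m : ℤ, 𝓕.delta e2 m * izwPow 𝓕.Fzi m e1 e0)
      = ∑ᶠ m : ℤ, 𝓕.delta e1 m * iwzPow 𝓕.F m e0 e2 := by
  have hD0 := 𝓕.constantCoeff_diffSeries
  have hP0 := 𝓕.constantCoeff_series
  have hFzi : 𝓕.Fzi = fun i j => zcoeff 𝓕.diffSeries ![i, j] := by
    ext i j
    rw [𝓕.zcoeff_diffSeries]
  have hF : (fun i j => 𝓕.F j i) = fun i j => zcoeff 𝓕.series ![i, j] := by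
    ext i j
    rw [𝓕.zcoeff_series, 𝓕.F_comm]
  obtain ⟨T, hT, hT'⟩ := 𝓕.exists_zcoeff_inv_add_inv
  obtain ⟨α, hα, hα'⟩ := exists_finsum_izwPow_mul_izwPow hD0 𝓕.zcoeff_diffSeries_one_zero hD0
    𝓕.zcoeff_diffSeries_one_zero
  obtain ⟨β, hβ, hβ'⟩ := exists_finsum_iwzPowNeg_mul_izwPow hD0 𝓕.zcoeff_diffSeries_one_zero hD0
    𝓕.zcoeff_diffSeries_zero_one
  obtain ⟨γ, hγ, hγ'⟩ := exists_finsum_izwPow_mul_izwPow hP0 𝓕.zcoeff_series_one_zero hD0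
    𝓕.zcoeff_diffSeries_one_zero
  obtain ⟨κ, hκ, hκ'⟩ := exists_finsum_iwzPowNeg_mul_izwPow hP0 𝓕.zcoeff_series_one_zero hD0
    𝓕.zcoeff_diffSeries_zero_one
  simp only [← hFzi] at hα' hβ' hγ' hκ'
  have hl := finsum_delta_mul 𝓕 (hα' e2 e1 e0) (hβ' e2 e1 e0)
  have hr := finsum_delta_mul 𝓕 (hγ' e1 e2 e0) (hκ' e1 e2 e0)
  simp only [iwzPow_eq_izwPow_swap, hF]
  rw [hl, hr, add_comm e1 e2, sub_eq_sub_iff_add_eq_add, hT α κ hα hκ, add_comm,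
    hT' β γ hβ hγ]
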